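/- Let n ≥ 2 and let θ : [0,∞) → 𝒳ₙ be differentiable and satisfy dθ^j_t/dt = 2φ^j(θ_t) for all t ≥ 0 and all j. Then the minimal gap Δ(t) := min_{1≤j≤n}(θ^{j+1}_t − θ^j_t) is non-decreasing in t, and moreover 2π/n − Δ(t) ≤ (2π/n − Δ(0))·e^{−nt} for all t ≥ 0; consequently d(θ_t) ≤ (n−1)·(2π/n − Δ(0))·e^{−nt} for all t ≥ 0. -/

import Mathlib

open MeasureTheory Filter Set
open scoped Real Topology ENNReal Classical

noncomputable section

/-- The configuration space `𝒳ₙ` of `n` ordered points on (a lift of) the circle: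
`θ¹ < θ² < ⋯ < θⁿ < θ¹ + 2π`. -/
def Xspace (n : ℕ) : Set (Fin n → ℝ) :=
  {x | StrictMono x ∧ ∀ i j : Fin n, x i < x j + 2 * π}

/-- The value `θ^{j+1}`, with the convention `θ^{n+1} = θ¹ + 2π`. -/
def nextVal {n : ℕ} (x : Fin n → ℝ) (j : Fin n) : ℝ :=
  if h : (j : ℕ) + 1 < n then x ⟨(j : ℕ) + 1, h⟩ else x ⟨0, j.pos⟩ + 2 * π

/-- The gap `θ^{j+1} - θ^j` (with wrap-around convention). -/
def gap {n : ℕ} (x : Fin n → ℝ) (j : Fin n) : ℝ := nextVal x j - x j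

/-- The minimal gap `Δ(θ) = min_j (θ^{j+1} - θ^j)`. -/
def minGap {n : ℕ} (x : Fin n → ℝ) : ℝ := ⨅ j : Fin n, gap x j

/-- `d(θ) := max_j |2π/n - (θ^{j+1} - θ^j)|`. -/
def dGap {n : ℕ} (x : Fin n → ℝ) : ℝ := ⨆ j : Fin n, |2 * π / n - gap x j|

/-- `φ^j(θ) = ∑_{k ≠ j} cot((θ^j - θ^k)/2)`. -/
def phi {n : ℕ} (x : Fin n → ℝ) (j : Fin n) : ℝ :=
  ∑ k ∈ Finset.univ.erase j, Real.cot ((x j - x k) / 2)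

/-- `φ_a^j := (a/4) φ^j`. -/
def phiA {n : ℕ} (a : ℝ) (x : Fin n → ℝ) (j : Fin n) : ℝ := a / 4 * phi x j

/-- Absolute continuity of every coordinate of `θ` on `[0, T]`: each component is the
integral of a (locally) integrable function. -/
def AbsCont {n : ℕ} (T : ℝ) (θ : ℝ → Fin n → ℝ) : Prop :=
  ∃ v : ℝ → Fin n → ℝ, (∀ j, IntegrableOn (fun s => v s j) (Icc 0 T)) ∧
    ∀ t ∈ Icc (0 : ℝ) T, ∀ j, θ t j = θ 0 j + ∫ s in (0 : ℝ)..t, v s j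

/-- Truncated multiradial Dirichlet energy `J_T(θ)`. -/
def mEnergy (n : ℕ) (T : ℝ) (θ : ℝ → Fin n → ℝ) : ℝ≥0∞ :=
  if AbsCont T θ then
    ENNReal.ofReal (1 / 2) *
      ∫⁻ s in Ioc (0 : ℝ) T,
        ENNReal.ofReal (∑ j, (deriv (fun t => θ t j) s - 2 * phi (θ s) j) ^ 2)
  else ⊤

/-- Multiradial Dirichlet energy `J(θ) = lim_{T→∞} J_T(θ)`, the supremum of the
nondecreasing family `J_T(θ)`. -/
def mEnergyInf (n : ℕ) (θ : ℝ → Fin n → ℝ) : ℝ≥0∞ := ⨆ T : ℝ, mEnergy n T θ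

/-!
Let `x⁺ = nextVal x` be the configuration whose points are the successors of those of `x`. Shifting
the labels does not change the drift, `φ^j(x⁺) = φ^{j+1}(x)`, so the gap `x⁺ - x` moves along the
flow with velocity `2 (φ(x⁺) - φ(x))`. Since `cot` has slope at most `-1`, at an index `j` of
minimal gap every summand of `φ^j(x⁺) - φ^j(x)` is at least half the excess of the `k`-th gap over
the `j`-th one. The gaps sum to `2π`, hence the minimal gap `Δ` grows at speed at least
`n (2π/n - Δ)`, and Grönwall's inequality for the minimum of finitely many functions concludes.
-/

section FiniteMinimum

variable {ι : Type*} [Finite ι] [Nonempty ι]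

lemma eventually_lt_slope_iInf {g : ι → ℝ → ℝ} {g' : ι → ℝ} {x r : ℝ}
    (hg : ∀ i, HasDerivWithinAt (g i) (g' i) (Ioi x) x)
    (hr : ∀ i, g i x = ⨅ k, g k x → r < g' i) :
    ∀ᶠ z in 𝓝[>] x, r < slope (fun t => ⨅ i, g i t) x z := by
  have above_line : ∀ i, ∀ᶠ z in 𝓝[>] x, (⨅ k, g k x) + r * (z - x) < g i z := by
    intro i
    rcases (ciInf_le (finite_range fun k => g k x).bddBelow i).lt_or_eq with inactive | active
    · have hline : ContinuousWithinAt (fun z => (⨅ k, g k x) + r * (z - x)) (Ioi x) x := by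
        fun_prop
      exact hline.eventually_lt (hg i).continuousWithinAt (by simpa using inactive)
    · have hslope := (hasDerivWithinAt_iff_tendsto_slope' self_notMem_Ioi).1 (hg i)
        |>.eventually_const_lt (hr i active.symm)
      filter_upwards [hslope, self_mem_nhdsWithin] with z hz hxz
      rw [slope_def_field, lt_div_iff₀ (sub_pos.2 hxz)] at hz
      linarith
  filter_upwards [eventually_all.2 above_line, self_mem_nhdsWithin] with z hz hxz
  obtain ⟨i, hi⟩ := exists_eq_ciInf_of_finite (f := fun i => g i z)
  rw [slope_def_field, lt_div_iff₀ (sub_pos.2 hxz), ← hi]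
  linarith [hz i]

lemma sub_iInf_le_mul_exp {g g' : ι → ℝ → ℝ} {a b c K : ℝ}
    (hcont : ∀ i, ContinuousOn (g i) (Icc a b))
    (hg : ∀ t ∈ Ico a b, ∀ i, HasDerivWithinAt (g i) (g' i t) (Ici t) t)
    (hg' : ∀ t ∈ Ico a b, ∀ i, g i t = ⨅ k, g k t → K * (c - g i t) ≤ g' i t) :
    ∀ t ∈ Icc a b, c - ⨅ i, g i t ≤ (c - ⨅ i, g i a) * Real.exp (-K * (t - a)) := by
  have : Fintype ι := Fintype.ofFinite ι
  have hcont_iInf : ContinuousOn (fun t => ⨅ i, g i t) (Icc a b) := by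
    simp_rw [← Finset.inf'_univ_eq_ciInf]
    exact ContinuousOn.finset_inf'_apply _ fun i _ => hcont i
  have hslope : ∀ t ∈ Ico a b, ∀ r, -K * (c - ⨅ i, g i t) < r →
      ∃ᶠ z in 𝓝[>] t, (z - t)⁻¹ * ((c - ⨅ i, g i z) - (c - ⨅ i, g i t)) < r := by
    intro t ht r hr
    have hlt : ∀ i, g i t = ⨅ k, g k t → -r < g' i t := fun i hi => by
      have := hg' t ht i hi
      rw [hi] at this
      linarith
    have hslope_iInf :=
      eventually_lt_slope_iInf (fun i => (hg t ht i).mono Ioi_subset_Ici_self) hlt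
    refine (hslope_iInf.mono fun z hz => ?_).frequently
    rw [slope_def_field, div_eq_inv_mul] at hz
    linarith
  simpa only [gronwallBound_ε0] using le_gronwallBound_of_liminf_deriv_right_le
    (f := fun t => c - ⨅ i, g i t) (continuousOn_const.sub hcont_iInf) hslope le_rfl
    fun t _ => (add_zero _).ge

end FiniteMinimum

lemma abs_le_card_sub_one_mul_of_sum_eq_zero {ι R : Type*} [Fintype ι] [CommRing R]
    [LinearOrder R] [IsStrictOrderedRing R] {a : ι → R} {w : R} (hsum : ∑ i, a i = 0)
    (hle : ∀ i, a i ≤ w) (j : ι) : |a j| ≤ (Fintype.card ι - 1) * w := by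
  have hneg : -a j ≤ (Fintype.card ι - 1) * w := by
    have hrest := Finset.sum_le_sum fun i (_ : i ∈ Finset.univ.erase j) => hle i
    rw [← Finset.add_sum_erase _ a (Finset.mem_univ j)] at hsum
    rw [Finset.sum_const, nsmul_eq_mul, Finset.cast_card_erase_of_mem (Finset.mem_univ j),
      Finset.card_univ] at hrest
    linarith
  refine abs_le'.2 ⟨?_, hneg⟩
  rcases subsingleton_or_nontrivial ι with hι | hι
  · have haj : a j = 0 := by rwa [Fintype.sum_subsingleton a j] at hsum
    rwa [haj, neg_zero, ← haj] at hneg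
  · have hcard : (2 : R) ≤ Fintype.card ι := by exact_mod_cast Fintype.one_lt_card (α := ι)
    have hw : 0 ≤ w := by
      by_contra! hw
      exact (Finset.sum_neg (fun i _ => (hle i).trans_lt hw) ⟨j, Finset.mem_univ j⟩).ne hsum
    exact (hle j).trans (le_mul_of_one_le_left hw (by linarith))

section Cotangent

lemma cot_periodic : Function.Periodic Real.cot π := fun x => by
  simp [Real.cot_eq_cos_div_sin]

lemma hasDerivAt_cot {x : ℝ} (hx : Real.sin x ≠ 0) :
    HasDerivAt Real.cot (-(Real.sin x ^ 2)⁻¹) x := by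
  rw [funext Real.cot_eq_cos_div_sin]
  refine ((Real.hasDerivAt_cos x).div (Real.hasDerivAt_sin x) hx).congr_deriv ?_
  field_simp
  linarith [Real.sin_sq_add_cos_sq x]

lemma antitoneOn_cot_add_id : AntitoneOn (fun u => Real.cot u + u) (Ioo 0 π) := by
  have hderiv : ∀ u ∈ Ioo 0 π,
      HasDerivAt (fun u => Real.cot u + u) (-(Real.sin u ^ 2)⁻¹ + 1) u := fun u hu =>
    (hasDerivAt_cot (Real.sin_pos_of_mem_Ioo hu).ne').add (hasDerivAt_id u)
  refine antitoneOn_of_hasDerivWithinAt_nonpos (convex_Ioo 0 π)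
    (fun u hu => (hderiv u hu).continuousAt.continuousWithinAt)
    (fun u hu => (hderiv u (interior_subset hu)).hasDerivWithinAt) fun u hu => ?_
  have hsin := Real.sin_pos_of_mem_Ioo (interior_subset hu)
  have : 1 ≤ (Real.sin u ^ 2)⁻¹ := (one_le_inv₀ (by positivity)).2 (Real.sin_sq_le_one u)
  linarith

end Cotangent

section Configurations

variable {n : ℕ}

lemma minGap_le_gap (x : Fin n → ℝ) (j : Fin n) : minGap x ≤ gap x j :=
  ciInf_le (finite_range _).bddBelow j

lemma continuous_gap (j : Fin n) : Continuous fun x : Fin n → ℝ => gap x j := by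
  unfold gap nextVal
  split_ifs <;> fun_prop

lemma half_sub_sub_le_cot_sub_cot {x y : Fin n → ℝ} (hx : x ∈ Xspace n) (hy : y ∈ Xspace n)
    {j k : Fin n} (hkj : k ≠ j) (hle : y j - x j ≤ y k - x k) :
    ((y k - x k) - (y j - x j)) / 2 ≤
      Real.cot ((y j - y k) / 2) - Real.cot ((x j - x k) / 2) := by
  rcases hkj.lt_or_gt with hlt | hgt
  · have hanti := antitoneOn_cot_add_id (a := (y j - y k) / 2) (b := (x j - x k) / 2)
      ⟨by linarith [hy.1 hlt], by linarith [hy.2 j k]⟩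
      ⟨by linarith [hx.1 hlt], by linarith [hx.2 j k]⟩ (by linarith)
    simp only at hanti
    linarith
  · have hanti := antitoneOn_cot_add_id (a := (y j - y k) / 2 + π) (b := (x j - x k) / 2 + π)
      ⟨by linarith [hy.2 k j], by linarith [hy.1 hgt]⟩
      ⟨by linarith [hx.2 k j], by linarith [hx.1 hgt]⟩ (by linarith)
    simp only [cot_periodic _] at hanti
    linarith

lemma half_sum_sub_le_phi_sub_phi {x y : Fin n → ℝ} (hx : x ∈ Xspace n) (hy : y ∈ Xspace n)
    {j : Fin n} (hj : ∀ k, y j - x j ≤ y k - x k) :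
    (∑ k, ((y k - x k) - (y j - x j))) / 2 ≤ phi y j - phi x j := by
  rw [phi, phi, ← Finset.sum_sub_distrib, Finset.sum_div, ← Finset.sum_erase Finset.univ (a := j)
    (by simp)]
  exact Finset.sum_le_sum fun k hk =>
    half_sub_sub_le_cot_sub_cot hx hy (Finset.ne_of_mem_erase hk) (hj k)

lemma nextVal_mem_Xspace {x : Fin n → ℝ} (hx : x ∈ Xspace n) : nextVal x ∈ Xspace n := by
  have hpi := Real.pi_pos
  refine ⟨fun i j hij => ?_, fun i j => ?_⟩
  · have hi : (i : ℕ) + 1 < n := by omega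
    simp only [nextVal, dif_pos hi]
    split_ifs
    · exact hx.1 (Fin.mk_lt_mk.2 (by omega))
    · exact hx.2 _ _
  · simp only [nextVal]
    split_ifs with hi hj hj
    · exact hx.2 _ _
    · linarith [hx.2 ⟨i + 1, hi⟩ ⟨0, i.pos⟩]
    · linarith [hx.1 (show (⟨0, i.pos⟩ : Fin n) < ⟨j + 1, hj⟩ from Fin.mk_lt_mk.2 (by omega))]
    · linarith

variable [NeZero n]

lemma nextVal_eq_add_ite (x : Fin n → ℝ) (j : Fin n) :
    nextVal x j = x (j + 1) + if j + 1 = 0 then 2 * π else 0 := by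
  obtain ⟨m, rfl⟩ := Nat.exists_eq_succ_of_ne_zero (NeZero.ne n)
  induction j using Fin.lastCases with
  | last => simp [nextVal]
  | cast i => simp [nextVal, Fin.succ]

lemma phi_nextVal (x : Fin n → ℝ) (j : Fin n) : phi (nextVal x) j = phi x (j + 1) := by
  refine Finset.sum_equiv (Equiv.addRight 1) (by simp) fun k _ => ?_
  rw [Equiv.coe_addRight, nextVal_eq_add_ite, nextVal_eq_add_ite]
  split_ifs
  · ring_nf
  · rw [← cot_periodic ((x (j + 1) - x (k + 1)) / 2)]
    ring_nf
  · rw [← cot_periodic.sub_eq ((x (j + 1) - x (k + 1)) / 2)]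
    ring_nf
  · ring_nf

lemma sum_gap (x : Fin n → ℝ) : ∑ j, gap x j = 2 * π := by
  have hshift (f : Fin n → ℝ) : ∑ j, f (j + 1) = ∑ j, f j := Equiv.sum_comp (Equiv.addRight 1) f
  simp only [gap, nextVal_eq_add_ite, Finset.sum_sub_distrib, Finset.sum_add_distrib]
  rw [hshift x, hshift fun j => if j = 0 then 2 * π else 0]
  simp

lemma natCast_mul_sub_gap_le_phi_sub_phi {x : Fin n → ℝ} (hx : x ∈ Xspace n) {j : Fin n}
    (hj : gap x j = minGap x) :
    n * (2 * π / n - gap x j) ≤ 2 * phi (nextVal x) j - 2 * phi x j := by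
  have hmin : ∀ k, gap x j ≤ gap x k := fun k => hj ▸ minGap_le_gap x k
  have hphi : (∑ k, (gap x k - gap x j)) / 2 ≤ phi (nextVal x) j - phi x j :=
    half_sum_sub_le_phi_sub_phi hx (nextVal_mem_Xspace hx) hmin
  rw [Finset.sum_sub_distrib, sum_gap, Finset.sum_const, Finset.card_univ, Fintype.card_fin,
    nsmul_eq_mul] at hphi
  rw [mul_sub, mul_div_cancel₀ _ (NeZero.ne (n : ℝ))]
  linarith

lemma sum_two_pi_div_sub_gap (x : Fin n → ℝ) : ∑ j, (2 * π / n - gap x j) = 0 := by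
  rw [Finset.sum_sub_distrib, sum_gap, Finset.sum_const, Finset.card_univ, Fintype.card_fin,
    nsmul_eq_mul, mul_div_cancel₀ _ (NeZero.ne (n : ℝ)), sub_self]

lemma minGap_le_two_pi_div (x : Fin n → ℝ) : minGap x ≤ 2 * π / n := by
  obtain ⟨j, -, hj⟩ := Finset.exists_le_of_sum_le (f := fun _ => 0) Finset.univ_nonempty
    (Finset.sum_const_zero.trans (sum_two_pi_div_sub_gap x).symm).le
  exact (minGap_le_gap x j).trans (sub_nonneg.1 hj)

lemma dGap_le_mul_sub_minGap (x : Fin n → ℝ) : dGap x ≤ (n - 1) * (2 * π / n - minGap x) :=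
  ciSup_le fun j => by
    simpa only [Fintype.card_fin] using abs_le_card_sub_one_mul_of_sum_eq_zero
      (sum_two_pi_div_sub_gap x) (fun k => sub_le_sub_left (minGap_le_gap x k) _) j

end Configurations

section Flow

variable {n : ℕ} [NeZero n] {θ : ℝ → Fin n → ℝ}

lemma hasDerivWithinAt_gap {s : Set ℝ} {t : ℝ}
    (hode : ∀ j, HasDerivWithinAt (fun u => θ u j) (2 * phi (θ t) j) s t) (j : Fin n) :
    HasDerivWithinAt (fun u => gap (θ u) j) (2 * phi (nextVal (θ t)) j - 2 * phi (θ t) j) s t := by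
  simp only [gap, phi_nextVal, nextVal_eq_add_ite]
  exact ((hode (j + 1)).add_const _).sub (hode j)

lemma two_pi_div_sub_minGap_le_mul_exp {a b : ℝ} (hcont : ContinuousOn θ (Icc a b))
    (hX : ∀ t ∈ Ico a b, θ t ∈ Xspace n)
    (hode : ∀ t ∈ Ico a b, ∀ j,
      HasDerivWithinAt (fun u => θ u j) (2 * phi (θ t) j) (Ici t) t) :
    ∀ t ∈ Icc a b,
      2 * π / n - minGap (θ t) ≤ (2 * π / n - minGap (θ a)) * Real.exp (-n * (t - a)) :=
  sub_iInf_le_mul_exp (fun j => (continuous_gap j).comp_continuousOn hcont)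
    (fun t ht => hasDerivWithinAt_gap (hode t ht))
    fun t ht _ hj => natCast_mul_sub_gap_le_phi_sub_phi (hX t ht) hj

end Flow

/-- Along the zero-energy flow `dθ^j/dt = 2φ^j(θ)`, the minimal gap
`Δ(t)` is non-decreasing, `2π/n - Δ(t) ≤ (2π/n - Δ(0)) e^{-nt}`, and consequently
`d(θ_t) ≤ (n-1)(2π/n - Δ(0)) e^{-nt}`. -/
theorem zero_energy_flow_gap_estimates
    (n : ℕ) (hn : 2 ≤ n) (θ : ℝ → Fin n → ℝ)
    (hX : ∀ t ∈ Ici (0 : ℝ), θ t ∈ Xspace n)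
    (hode : ∀ t ∈ Ici (0 : ℝ), ∀ j : Fin n,
      HasDerivWithinAt (fun s => θ s j) (2 * phi (θ t) j) (Ici 0) t) :
    MonotoneOn (fun t => minGap (θ t)) (Ici 0) ∧
    (∀ t ∈ Ici (0 : ℝ),
      2 * π / n - minGap (θ t) ≤ (2 * π / n - minGap (θ 0)) * Real.exp (-(n : ℝ) * t)) ∧
    (∀ t ∈ Ici (0 : ℝ),
      dGap (θ t) ≤ ((n : ℝ) - 1) * (2 * π / n - minGap (θ 0)) * Real.exp (-(n : ℝ) * t)) := by
  have : NeZero n := ⟨by omega⟩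
  have hcont : ContinuousOn θ (Ici 0) :=
    continuousOn_pi.2 fun j t ht => (hode t ht j).continuousWithinAt
  have contraction {s t : ℝ} (hs : 0 ≤ s) (hst : s ≤ t) :
      2 * π / n - minGap (θ t) ≤ (2 * π / n - minGap (θ s)) * Real.exp (-n * (t - s)) :=
    two_pi_div_sub_minGap_le_mul_exp (hcont.mono fun u hu => hs.trans hu.1)
      (fun u hu => hX u (hs.trans hu.1))
      (fun u hu j => (hode u (hs.trans hu.1) j).mono (Ici_subset_Ici.2 (hs.trans hu.1)))
      t ⟨hst, le_rfl⟩
  have decay : ∀ t ∈ Ici (0 : ℝ),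
      2 * π / n - minGap (θ t) ≤ (2 * π / n - minGap (θ 0)) * Real.exp (-n * t) := fun t ht => by
    simpa only [sub_zero] using contraction le_rfl ht
  refine ⟨fun s hs t _ hst => ?_, decay, fun t ht => ?_⟩
  · have hexp : Real.exp (-n * (t - s)) ≤ 1 := Real.exp_le_one_iff.2 <|
      mul_nonpos_of_nonpos_of_nonneg (by simp) (sub_nonneg.2 hst)
    exact (sub_le_sub_iff_left _).1 <| (contraction hs hst).trans <|
      mul_le_of_le_one_right (sub_nonneg.2 (minGap_le_two_pi_div _)) hexp
  · have hn1 : (0 : ℝ) ≤ n - 1 := sub_nonneg.2 (by exact_mod_cast one_le_two.trans hn)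
    rw [mul_assoc]
    exact (dGap_le_mul_sub_minGap _).trans (mul_le_mul_of_nonneg_left (decay t ht) hn1)

end
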